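/- arXiv:1606.04850 — 2 statements merged into one kernel-verified Lean document; each statement's English description precedes it below -/
import Mathlib

section
/- The series ∑_{n=0}^∞ ζ(2n)/((2n+3)·4^n) equals -(1/2)·log 2 + 9ζ(3)/(4π²). -/
open Real
theorem aC : ∀ t ∈ Set.Icc (0:ℝ) 1, 0 < sinc (π/2*t) := by
  intro t ht
  rcases eq_or_lt_of_le ht.1 with h | h
  · simp [← h]
  · have h1 : 0 < π/2*t := by positivity
    rw [sinc_of_ne_zero h1.ne']
    refine div_pos (sin_pos_of_pos_of_lt_pi h1 ?_) h1
    nlinarith [pi_pos, ht.2]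

noncomputable def CC (t : ℝ) : ℝ := cos (π/2*t) / sinc (π/2*t)

theorem CC_cont : ContinuousOn CC (Set.Icc 0 1) := by
  unfold CC
  refine ContinuousOn.div (by fun_prop) ?_ (fun t ht => (aC t ht).ne')
  exact (continuous_sinc.comp (by fun_prop : Continuous fun t : ℝ => π/2*t)).continuousOn

theorem sin_pos' {t : ℝ} (h0 : 0 < t) (h1 : t ≤ 1) : 0 < sin (π/2*t) := by
  refine (sin_pos_of_pos_of_lt_pi (by positivity) ?_)
  nlinarith [pi_pos]

theorem CC_eq {t : ℝ} (h0 : 0 < t) : CC t = π/2*t * cos (π/2*t) / sin (π/2*t) := by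
  unfold CC
  rw [sinc_of_ne_zero (by positivity)]
  field_simp

theorem CC_int : IntervalIntegrable CC MeasureTheory.volume 0 1 := by
  apply ContinuousOn.intervalIntegrable
  rw [Set.uIcc_of_le zero_le_one]; exact CC_cont

theorem logsin_int : IntervalIntegrable (fun t => log (sin (π/2*t))) MeasureTheory.volume 0 1 := by
  have := (intervalIntegrable_log_sin (a := 0) (b := π/2)).comp_mul_left (c := π/2)
  have hpi := pi_ne_zero
  simpa [hpi] using this

theorem int_logsin : ∫ t in (0:ℝ)..1, log (sin (π/2*t)) = - log 2 := by
  rw [intervalIntegral.integral_comp_mul_left (fun y => log (sin y)) (by positivity)]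
  simp [integral_log_sin_zero_pi_div_two]
  field_simp

theorem int_CC : ∫ t in (0:ℝ)..1, CC t = log 2 := by
  have h := intervalIntegral.integral_eq_sub_of_hasDerivAt_of_le (a := 0) (b := 1)
    (f := fun t => t * log (sin (π/2*t))) (f' := fun t => log (sin (π/2*t)) + CC t) zero_le_one ?_ ?_ 
    (logsin_int.add CC_int)
  · rw [intervalIntegral.integral_add logsin_int CC_int, int_logsin] at h
    simp at h
    linarith
  · have : ContinuousOn (fun t => 2/π * ((π/2*t) * log (π/2*t)) + t * log (sinc (π/2*t))) (Set.Icc 0 1) := by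
      refine ContinuousOn.add ?_ (ContinuousOn.mul (by fun_prop) (ContinuousOn.log ?_ (fun t ht => (aC t ht).ne')))
      · exact (continuous_const.mul (continuous_mul_log.comp (by fun_prop : Continuous fun t : ℝ => π/2*t))).continuousOn
      · exact (continuous_sinc.comp (by fun_prop : Continuous fun t : ℝ => π/2*t)).continuousOn
    refine this.congr ?_
    intro t ht
    rcases eq_or_lt_of_le ht.1 with h | h
    · simp [← h]
    · have h1 : 0 < π/2*t := by positivity
      have e : sin (π/2*t) = π/2*t * sinc (π/2*t) := by
        rw [sinc_of_ne_zero h1.ne']; field_simp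
      simp only [e]
      rw [log_mul h1.ne' (aC t ht).ne']
      field_simp
  · intro t ht
    have h2 : HasDerivAt (fun t : ℝ => π/2*t) (π/2) t := by
      simpa using (hasDerivAt_id t).const_mul (π/2)
    have h3 := (hasDerivAt_id t).mul (h2.sin.log (sin_pos' ht.1 ht.2.le).ne')
    convert! h3 using 1
    rw [CC_eq ht.1]
    simp
    ring

noncomputable def ZZ (n : ℕ) : ℝ := ∑' k : ℕ, 1 / ((k:ℝ) + 1) ^ (2*n+2)

theorem ZZ_hasSum (n : ℕ) : HasSum (fun k : ℕ => 1 / ((k:ℝ) + 1) ^ (2*n+2)) (ZZ n) := by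
  apply Summable.hasSum
  have := (summable_nat_add_iff 1).2 (Real.summable_one_div_nat_pow (p := 2*n+2).2 (by omega))
  simpa using this

theorem cot_real {t : ℝ} (h0 : 0 < t) (h1 : t ≤ 1) :
    HasSum (fun k : ℕ => (t/2)^2 / (((k:ℝ)+1)^2 - (t/2)^2)) ((1 - CC t)/2) := by
  have hx : ((t/2 : ℝ) : ℂ) ∈ Complex.integerComplement := by
    rintro ⟨n, hn⟩
    have hn' : (n:ℝ) = t/2 := by exact_mod_cast hn
    have a1 : (0:ℝ) < n := by rw [hn']; positivity
    have a2 : (n:ℝ) < 1 := by rw [hn']; linarith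
    have a3 : 0 < n := by exact_mod_cast a1
    have a4 : n < 1 := by exact_mod_cast a2
    omega
  have h := (summable_cotTerm hx).hasSum
  have h' : ∑' n, cotTerm ((t/2 : ℝ) : ℂ) n = _ := (cot_series_rep' hx).symm
  rw [h'] at h
  have h2 : HasSum (fun k : ℕ => 1/(t/2 - ((k:ℝ)+1)) + 1/(t/2+((k:ℝ)+1))) (π * (cos (π*(t/2)) / sin (π*(t/2))) - 1/(t/2)) := by
    rw [← Complex.hasSum_ofReal]
    convert! h using 1
    · funext k; simp [cotTerm]
    · simp [Complex.cot]
  have h3 := h2.mul_left (-(t/2)/2)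
  convert! h3 using 1
  · funext k
    have b1 : t/2 - ((k:ℝ)+1) ≠ 0 := by
      have : (0:ℝ) ≤ k := by positivity
      intro h; linarith
    have b2 : t/2 + ((k:ℝ)+1) ≠ 0 := by positivity
    have b3 : ((k:ℝ)+1)^2 - (t/2)^2 ≠ 0 := by
      have : ((k:ℝ)+1)^2 - (t/2)^2 = -((t/2 - ((k:ℝ)+1)) * (t/2 + ((k:ℝ)+1))) := by ring
      rw [this]; exact neg_ne_zero.2 (mul_ne_zero b1 b2)
    rw [div_add_div _ _ b1 b2, ← mul_div_assoc, div_eq_div_iff b3 (mul_ne_zero b1 b2)]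
    ring
  · rw [CC_eq h0]
    rw [show π*(t/2) = π/2*t by ring]
    have := (sin_pos' h0 h1).ne'
    field_simp
    ring

theorem keyA {t : ℝ} (h0 : 0 < t) (h1 : t ≤ 1) :
    HasSum (fun n : ℕ => ZZ n * (t/2)^(2*n+2)) ((1 - CC t)/2) := by
  set f : ℕ × ℕ → ℝ := fun p => (t/2)^(2*p.2+2) / ((p.1:ℝ)+1)^(2*p.2+2) with hf
  have hin : ∀ k : ℕ, HasSum (fun m => f (k, m)) ((t/2)^2 / (((k:ℝ)+1)^2 - (t/2)^2)) := by
    intro k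
    have hk : (0:ℝ) ≤ k := by positivity
    have hlt : (t/2)^2/((k:ℝ)+1)^2 < 1 := by
      rw [div_lt_one (by positivity)]
      nlinarith
    have := (hasSum_geometric_of_lt_one (by positivity) hlt).mul_left ((t/2)^2/((k:ℝ)+1)^2)
    convert! this using 1
    · funext m
      simp only [hf]
      rw [← div_pow, ← div_pow, ← pow_mul, ← pow_add]
      congr 1; ring
    · have : ((k:ℝ)+1)^2 - (t/2)^2 ≠ 0 := by nlinarith
      have h5 : 1 - (t/2)^2/((k:ℝ)+1)^2 = (((k:ℝ)+1)^2 - (t/2)^2)/((k:ℝ)+1)^2 := by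
        field_simp
      rw [h5, inv_div]
      have : ((k:ℝ)+1)^2 ≠ 0 := by positivity
      field_simp
  have hs : Summable f := by
    rw [summable_prod_of_nonneg (fun p => by simp only [hf]; positivity)]
    refine ⟨fun k => (hin k).summable, ?_⟩
    simp_rw [fun k => (hin k).tsum_eq]
    exact (cot_real h0 h1).summable
  have e := (hs.hasSum.prod_fiberwise hin).unique (cot_real h0 h1)
  rw [← e]
  have h2 : HasSum (f ∘ Prod.swap) (∑' p, f p) := (Equiv.prodComm ℕ ℕ).hasSum_iff.2 hs.hasSum
  refine h2.prod_fiberwise ?_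
  intro n
  have := (ZZ_hasSum n).mul_right ((t/2)^(2*n+2))
  convert! this using 1
  funext k
  simp [hf]
  ring

theorem ZZ_nonneg (n : ℕ) : 0 ≤ ZZ n := tsum_nonneg fun k => by positivity

theorem keyB : HasSum (fun n : ℕ => ZZ n / 4^(n+1) / (2*n+5)) (∫ t in (0:ℝ)..1, t^2 * ((1 - CC t)/2)) := by
  have hsum := (keyA one_pos le_rfl).summable
  have := intervalIntegral.hasSum_integral_of_dominated_convergence (a := 0) (b := 1) (μ := MeasureTheory.volume)
    (F := fun (n:ℕ) (t:ℝ) => t^2 * (ZZ n * (t/2)^(2*n+2))) (f := fun t => t^2 * ((1 - CC t)/2))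
    (fun n _ => ZZ n * (1/2)^(2*n+2)) ?_ ?_ ?_ ?_ ?_
  · convert! this using 1
    funext n
    have : ∀ t : ℝ, t^2 * (ZZ n * (t/2)^(2*n+2)) = ZZ n / 4^(n+1) * t^(2*n+4) := by
      intro t
      rw [div_pow, show (2:ℝ)^(2*n+2) = 4^(n+1) by rw [show 2*n+2 = 2*(n+1) by ring, pow_mul]; norm_num]
      ring
    simp_rw [this]
    rw [intervalIntegral.integral_const_mul, integral_pow]
    simp
    rw [show (2*(n:ℝ)+4+1) = 2*n+5 by ring]
    rfl
  · intro n; exact (by fun_prop : Continuous _).aestronglyMeasurable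
  · intro n
    refine Filter.Eventually.of_forall fun t ht => ?_
    rw [Set.uIoc_of_le zero_le_one] at ht
    have := ZZ_nonneg n
    have h0 := ht.1.le
    rw [Real.norm_of_nonneg (by positivity)]
    have e1 : t^2 ≤ 1 := pow_le_one₀ h0 ht.2
    have e2 : ZZ n * (t/2)^(2*n+2) ≤ ZZ n * (1/2)^(2*n+2) := by
      gcongr; exact ht.2
    have e3 : 0 ≤ ZZ n * (t/2)^(2*n+2) := by positivity
    nlinarith
  · exact Filter.Eventually.of_forall fun t _ => hsum
  · exact intervalIntegrable_const
  · refine Filter.Eventually.of_forall fun t ht => ?_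
    rw [Set.uIoc_of_le zero_le_one] at ht
    exact (keyA ht.1 ht.2).mul_left _

noncomputable def GG (n : ℕ) (t : ℝ) : ℝ := ∑ k ∈ Finset.range n, (cos (π*(k+1)*t) + cos (π*k*t))

theorem GG_eq (n : ℕ) (t : ℝ) (h : sin (π/2*t) ≠ 0) : sin (π*n*t) * (cos (π/2*t) / sin (π/2*t)) = GG n t := by
  induction n with
  | zero => simp [GG]
  | succ n ih =>
    rw [GG, Finset.sum_range_succ, ← GG, ← ih]
    have e1 : sin (π*((n+1:ℕ):ℝ)*t) = sin (π*n*t) * cos (2*(π/2*t)) + cos (π*n*t) * sin (2*(π/2*t)) := by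
      rw [← sin_add]; congr 1; push_cast; ring
    have e2 : cos (π*((n:ℝ)+1)*t) = cos (π*n*t) * cos (2*(π/2*t)) - sin (π*n*t) * sin (2*(π/2*t)) := by
      rw [← cos_add]; congr 1; push_cast; ring
    rw [e1, e2, sin_two_mul, cos_two_mul]
    have hsq := sin_sq_add_cos_sq (π/2*t)
    generalize sin (π/2*t) = s at *
    generalize cos (π/2*t) = c at *
    generalize sin (π*n*t) = A at *
    generalize cos (π*n*t) = B at *
    field_simp
    linear_combination 2*A*c*hsq

theorem GG_cont (n : ℕ) : Continuous (GG n) := by unfold GG; fun_prop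

theorem GG_le (n : ℕ) (t : ℝ) : |GG n t| ≤ 2*n := by
  unfold GG
  refine (Finset.abs_sum_le_sum_abs _ _).trans ?_
  have : ∀ k ∈ Finset.range n, |cos (π*((k:ℝ)+1)*t) + cos (π*k*t)| ≤ 2 := by
    intro k _
    refine (abs_add_le _ _).trans ?_
    linarith [abs_cos_le_one (π*((k:ℝ)+1)*t), abs_cos_le_one (π*k*t)]
  refine (Finset.sum_le_sum this).trans ?_
  simp [mul_comm]

theorem int_cos (k : ℕ) : ∫ t in (0:ℝ)..1, cos (π*((k:ℝ)+1)*t) = 0 := by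
  rw [intervalIntegral.integral_comp_mul_left (fun y => cos y) (by positivity)]
  have := sin_nat_mul_pi (k+1)
  push_cast at this
  rw [mul_comm] at this
  simp [this]

theorem int_GG (n : ℕ) : ∫ t in (0:ℝ)..1, GG (n+1) t = 1 := by
  induction n with
  | zero => 
    simp only [GG, zero_add, Finset.sum_range_one, Nat.cast_zero]
    rw [intervalIntegral.integral_add (Continuous.intervalIntegrable (by fun_prop) _ _) (Continuous.intervalIntegrable (by fun_prop) _ _)]
    have := int_cos 0
    simp at this
    simp [this]
  | succ n ih =>
    have : ∀ t, GG (n+1+1) t = GG (n+1) t + (cos (π*(((n+1:ℕ):ℝ)+1)*t) + cos (π*((n:ℝ)+1)*t)) := by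
      intro t; rw [GG, Finset.sum_range_succ, ← GG]; push_cast; rfl
    simp_rw [this]
    rw [intervalIntegral.integral_add ((GG_cont _).intervalIntegrable _ _) (Continuous.intervalIntegrable (by fun_prop) _ _), ih,
     intervalIntegral.integral_add (Continuous.intervalIntegrable (by fun_prop) _ _) (Continuous.intervalIntegrable (by fun_prop) _ _), int_cos, int_cos]
    simp

theorem bern (t : ℝ) (h0 : 0 < t) (h1 : t ≤ 1) :
    HasSum (fun n : ℕ => (-1:ℝ)^n / (n:ℝ)^3 * sin (π*n*t)) (π^3/12 * (t^3 - t)) := by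
  have := hasSum_one_div_nat_pow_mul_sin (k := 1) one_ne_zero (x := (1+t)/2) ⟨by linarith, by linarith⟩
  convert! this using 1
  · funext n
    rw [show 2*π*n*((1+t)/2) = π*n*t + n*π by ring, sin_add_nat_mul_pi]
    ring
  · simp [Polynomial.bernoulli_def, Finset.sum_range_succ, Nat.factorial, bernoulli_eq_bernoulli'_of_ne_one, bernoulli_one, bernoulli'_two, bernoulli'_three, bernoulli_zero, Nat.choose]
    ring

theorem keyC : HasSum (fun n : ℕ => (-1:ℝ)^n / (n:ℝ)^3) (∫ t in (0:ℝ)..1, π^2/6 * (t^2-1) * CC t) := by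
  have := intervalIntegral.hasSum_integral_of_dominated_convergence (a := 0) (b := 1) (μ := MeasureTheory.volume)
    (F := fun (n:ℕ) (t:ℝ) => (-1:ℝ)^n / (n:ℝ)^3 * GG n t) (f := fun t => π^2/6 * (t^2-1) * CC t)
    (fun n _ => 2 * (1/(n:ℝ)^2)) ?_ ?_ ?_ ?_ ?_
  · convert! this using 1
    funext n
    rw [intervalIntegral.integral_const_mul]
    cases n with
    | zero => simp
    | succ n => rw [int_GG, mul_one]
  · intro n; exact ((GG_cont n).const_mul _).aestronglyMeasurable
  · intro n
    refine Filter.Eventually.of_forall fun t ht => ?_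
    rw [norm_mul, norm_div, norm_pow, norm_neg, norm_one, one_pow, norm_pow, Real.norm_natCast, Real.norm_eq_abs]
    rcases Nat.eq_zero_or_pos n with h | h
    · simp [h]
    · calc _ ≤ 1/(n:ℝ)^3 * (2*n) := by gcongr; exact GG_le n t
        _ = _ := by field_simp
  · exact Filter.Eventually.of_forall fun t _ => (Real.summable_one_div_nat_pow.2 (by norm_num)).mul_left 2
  · exact intervalIntegrable_const
  · refine Filter.Eventually.of_forall fun t ht => ?_
    rw [Set.uIoc_of_le zero_le_one] at ht
    have hs := (sin_pos' ht.1 ht.2).ne'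
    have := (bern t ht.1 ht.2).mul_right (cos (π/2*t) / sin (π/2*t))
    convert! this using 1
    · funext n; rw [mul_assoc, GG_eq n t hs]
    · rw [CC_eq ht.1]; field_simp; ring

noncomputable def Z3 : ℝ := ∑' n : ℕ, 1 / (n:ℝ)^3

theorem alt3 : HasSum (fun n : ℕ => (-1:ℝ)^n / (n:ℝ)^3) (-(3/4) * Z3) := by
  have h : HasSum (fun n : ℕ => 1 / (n:ℝ)^3) Z3 :=
    (Real.summable_one_div_nat_pow.2 (by norm_num)).hasSum
  have he : HasSum (fun n : ℕ => 1 / ((2*n:ℕ):ℝ)^3) (Z3/8) := by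
    have e : (fun n : ℕ => 1 / ((2*n:ℕ):ℝ)^3) = fun n : ℕ => 1 / (n:ℝ)^3 / 8 := by
      funext n; push_cast; rw [mul_pow, div_div]; ring
    rw [e]; exact h.div_const 8
  have hinj : Function.Injective (fun n : ℕ => 2*n+1) := fun a b hab => by
    simp only at hab; omega
  obtain ⟨O, ho⟩ : Summable (fun n : ℕ => 1 / ((2*n+1:ℕ):ℝ)^3) := h.summable.comp_injective hinj
  have e : Z3/8 + O = Z3 :=
    (HasSum.even_add_odd (f := fun n : ℕ => 1 / (n:ℝ)^3) he ho).unique h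
  rw [show -(3/4)*Z3 = Z3/8 + -O by linarith]
  refine HasSum.even_add_odd (f := fun n : ℕ => (-1:ℝ)^n / (n:ℝ)^3) ?_ ?_
  · have e : (fun n : ℕ => (-1:ℝ)^(2*n) / ((2*n:ℕ):ℝ)^3) = fun n : ℕ => 1 / ((2*n:ℕ):ℝ)^3 := by
      funext n; rw [pow_mul]; norm_num
    rw [e]; exact he
  · have e : (fun n : ℕ => (-1:ℝ)^(2*n+1) / ((2*n+1:ℕ):ℝ)^3) = fun n : ℕ => -(1 / ((2*n+1:ℕ):ℝ)^3) := by
      funext n; rw [pow_succ, pow_mul, neg_one_sq, one_pow, one_mul, neg_div]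
    rw [e]; exact ho.neg

theorem int_sq : ∫ t in (0:ℝ)..1, t^2 * ((1 - CC t)/2) = 1/6 - 1/2*log 2 + 9*Z3/(4*π^2) := by
  have h1 := keyC.unique alt3
  have hI : IntervalIntegrable (fun t => (t^2-1) * CC t) MeasureTheory.volume 0 1 :=
    CC_int.continuousOn_mul (by fun_prop)
  simp_rw [mul_assoc] at h1
  rw [intervalIntegral.integral_const_mul] at h1
  have h2 : ∀ t, t^2 * ((1 - CC t)/2) = 1/2 * t^2 - 1/2*((t^2-1) * CC t) - 1/2 * CC t := by intro t; ring
  simp_rw [h2]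
  rw [intervalIntegral.integral_sub, intervalIntegral.integral_sub, intervalIntegral.integral_const_mul, intervalIntegral.integral_const_mul, intervalIntegral.integral_const_mul, int_CC, integral_pow]
  · have h3 : ∫ t in (0:ℝ)..1, (t^2-1) * CC t = -(9/2)*Z3/π^2 := by
      field_simp
      field_simp at h1
      linarith
    rw [h3]
    field_simp
    norm_num
    ring
  · exact Continuous.intervalIntegrable (by fun_prop) _ _
  · exact hI.const_mul _
  · exact (Continuous.intervalIntegrable (by fun_prop) _ _).sub (hI.const_mul _)
  · exact CC_int.const_mul _

theorem stmt3 :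
    ∑' n : ℕ, riemannZeta (2 * n) / ((2 * n + 3) * 4 ^ n) =
      -(1 / 2) * (Real.log 2 : ℂ) + 9 * riemannZeta 3 / (4 * (π : ℂ) ^ 2) := by
  have hz3 : riemannZeta 3 = (Z3 : ℂ) := by
    have := zeta_nat_eq_tsum_of_gt_one (k := 3) (by norm_num)
    rw [Z3, Complex.ofReal_tsum]
    push_cast
    exact_mod_cast this
  have hz : ∀ n : ℕ, riemannZeta (2 * ((n+1:ℕ):ℂ)) = (ZZ n : ℂ) := by
    intro n
    have := zeta_eq_tsum_one_div_nat_add_one_cpow (s := ((2*n+2:ℕ):ℂ)) (by rw [Complex.natCast_re]; norm_cast; omega)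
    simp only [Complex.cpow_natCast] at this
    rw [ZZ, Complex.ofReal_tsum]
    push_cast
    rw [← this]
    congr 1; push_cast; ring
  have hB := keyB
  rw [int_sq, ← Complex.hasSum_ofReal] at hB
  have hS : HasSum (fun n : ℕ => riemannZeta (2 * n) / ((2 * n + 3) * 4 ^ n))
     (riemannZeta (2 * ((0:ℕ):ℂ)) / ((2 * ((0:ℕ):ℂ) + 3) * 4 ^ 0) + ((1/6 - 1/2*log 2 + 9*Z3/(4*π^2) : ℝ) : ℂ)) := by
    refine HasSum.zero_add ?_
    convert! hB using 1
    funext n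
    rw [hz]
    push_cast
    rw [div_div]
    congr 1
    ring
  rw [hS.tsum_eq, hz3]
  simp [riemannZeta_zero]
  ring
end

section
/- The series ∑_{n=0}^∞ ζ(2n)/((n+2)·4^n) equals -log 2 + 9ζ(3)/π² - 93ζ(5)/(2π⁴). -/
open Real

open Filter Topology MeasureTheory

/-- real zeta at naturals -/
noncomputable def zr (p : ℕ) : ℝ := ∑' k : ℕ, 1 / ((k : ℝ) + 1) ^ p

lemma zr_summable {p : ℕ} (hp : 1 < p) : Summable (fun k : ℕ => 1 / ((k : ℝ) + 1) ^ p) := by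
  have h := (summable_nat_add_iff 1).2 (Real.summable_one_div_nat_pow.2 hp)
  simpa using h

lemma zr_zeta {p : ℕ} (hp : 1 < p) : riemannZeta p = (zr p : ℂ) := by
  rw [zeta_eq_tsum_one_div_nat_add_one_cpow (by simpa using hp), zr, Complex.ofReal_tsum]
  refine tsum_congr fun k => ?_
  push_cast
  rw [Complex.cpow_natCast]

lemma alt_sum (p N : ℕ) :
    ∑ k ∈ Finset.range (2 * N), (-1 : ℝ) ^ (k + 1) / ((k : ℝ) + 1) ^ p =
      2 / 2 ^ p * ∑ k ∈ Finset.range N, 1 / ((k : ℝ) + 1) ^ p -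
        ∑ k ∈ Finset.range (2 * N), 1 / ((k : ℝ) + 1) ^ p := by
  induction N with
  | zero => simp
  | succ n ih =>
    rw [show 2 * (n + 1) = 2 * n + 1 + 1 by ring]
    simp only [Finset.sum_range_succ]
    rw [ih]
    have h1 : (-1 : ℝ) ^ (2 * n + 1) = -1 := by rw [pow_succ, pow_mul]; simp
    have h2 : (-1 : ℝ) ^ (2 * n + 1 + 1) = 1 := by rw [pow_succ, h1]; simp
    rw [h1, h2]
    have h3 : ((2 * n + 1 : ℕ) : ℝ) + 1 = 2 * (n + 1) := by push_cast; ring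
    rw [h3, mul_pow]
    field_simp
    ring

lemma tendsto_two_mul : Tendsto (fun N : ℕ => 2 * N) atTop atTop :=
  tendsto_id.const_mul_atTop' (by norm_num)

lemma alt_tendsto {p : ℕ} (hp : 1 < p) :
    Tendsto (fun N : ℕ => ∑ k ∈ Finset.range (2 * N), (-1 : ℝ) ^ (k + 1) / ((k : ℝ) + 1) ^ p) atTop
      (𝓝 (2 / 2 ^ p * zr p - zr p)) := by
  simp_rw [alt_sum]
  have h := (zr_summable hp).hasSum.tendsto_sum_nat
  exact (h.const_mul _).sub (h.comp tendsto_two_mul)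

lemma alt_tendsto_one :
    Tendsto (fun N : ℕ => ∑ k ∈ Finset.range (2 * N), (-1 : ℝ) ^ (k + 1) / ((k : ℝ) + 1) ^ 1) atTop
      (𝓝 (- Real.log 2)) := by
  simp_rw [alt_sum]
  have h := Real.tendsto_harmonic_sub_log
  have h2 := h.sub (h.comp tendsto_two_mul)
  have h3 := h2.sub_const (Real.log 2)
  rw [sub_self, zero_sub] at h3
  refine h3.congr' ?_
  filter_upwards [eventually_gt_atTop 0] with N hN
  have : (N : ℝ) ≠ 0 := by positivity
  simp only [Function.comp, harmonic, Nat.cast_mul, Nat.cast_ofNat]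
  rw [Real.log_mul (by norm_num) this]
  push_cast
  simp
  ring

lemma int_sin (a : ℝ) (ha : a ≠ 0) :
    ∫ t in (0:ℝ)..1, t ^ 4 * Real.sin (a * t) =
      (-Real.cos a / a + 4 * Real.sin a / a ^ 2 + 12 * Real.cos a / a ^ 3 - 24 * Real.sin a / a ^ 4
        - 24 * Real.cos a / a ^ 5) + 24 / a ^ 5 := by
  have key : ∀ t ∈ Set.uIcc (0:ℝ) 1, HasDerivAt (fun t : ℝ => -t ^ 4 * Real.cos (a * t) / a
      + 4 * t ^ 3 * Real.sin (a * t) / a ^ 2 + 12 * t ^ 2 * Real.cos (a * t) / a ^ 3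
      - 24 * t * Real.sin (a * t) / a ^ 4 - 24 * Real.cos (a * t) / a ^ 5)
      (t ^ 4 * Real.sin (a * t)) t := by
    intro t _
    have hl : HasDerivAt (fun t : ℝ => a * t) a t := by
      simpa using (hasDerivAt_id t).const_mul a
    have hs := hl.sin
    have hc := hl.cos
    have p4 := ((hasDerivAt_pow 4 t).neg.mul hc).div_const a
    have p3 := (((hasDerivAt_pow 3 t).const_mul 4).mul hs).div_const (a ^ 2)
    have p2 := (((hasDerivAt_pow 2 t).const_mul 12).mul hc).div_const (a ^ 3)
    have p1 := (((hasDerivAt_id t).const_mul 24).mul hs).div_const (a ^ 4)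
    have p0 := (hc.const_mul 24).div_const (a ^ 5)
    have hall := (((p4.add p3).add p2).sub p1).sub p0
    refine HasDerivAt.congr_deriv hall ?_
    simp only [Pi.neg_apply, id]
    push_cast
    field_simp
    ring
  rw [intervalIntegral.integral_eq_sub_of_hasDerivAt key
    (Continuous.intervalIntegrable (by fun_prop) _ _)]
  simp

lemma int_sin_nat (k : ℕ) :
    ∫ t in (0:ℝ)..1, t ^ 4 * Real.sin ((((k : ℝ) + 1) * π) * t) =
      -(1 / π) * ((-1 : ℝ) ^ (k + 1) / ((k : ℝ) + 1) ^ 1)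
      + 12 / π ^ 3 * ((-1 : ℝ) ^ (k + 1) / ((k : ℝ) + 1) ^ 3)
      - 24 / π ^ 5 * ((-1 : ℝ) ^ (k + 1) / ((k : ℝ) + 1) ^ 5)
      + 24 / π ^ 5 * (1 / ((k : ℝ) + 1) ^ 5) := by
  have hk : ((k : ℝ) + 1) ≠ 0 := by positivity
  rw [int_sin _ (mul_ne_zero hk pi_ne_zero)]
  have h1 : Real.sin (((k : ℝ) + 1) * π) = 0 := by
    have := Real.sin_nat_mul_pi (k + 1); push_cast at this; exact this
  have h2 : Real.cos (((k : ℝ) + 1) * π) = (-1) ^ (k + 1) := by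
    have := Real.cos_nat_mul_pi (k + 1); push_cast at this; exact this
  rw [h1, h2]
  field_simp
  ring

lemma dirichlet (θ : ℝ) (N : ℕ) :
    (∑ k ∈ Finset.range N, 2 * Real.sin (((k : ℝ) + 1) * (2 * θ))) * Real.sin θ =
      Real.cos θ - Real.cos ((2 * N + 1) * θ) := by
  induction N with
  | zero => simp
  | succ n ih =>
    rw [Finset.sum_range_succ, add_mul, ih]
    push_cast
    have e1 : (2 * (n : ℝ) + 1) * θ = ((n : ℝ) + 1) * (2 * θ) - θ := by ring
    have e2 : (2 * ((n : ℝ) + 1) + 1) * θ = ((n : ℝ) + 1) * (2 * θ) + θ := by ring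
    rw [e1, e2, Real.cos_sub, Real.cos_add]
    ring

/-- auxiliary function -/
noncomputable def ff (t : ℝ) : ℝ := t ^ 4 / Real.sin (π / 2 * t)

lemma sin_pos_aux {t : ℝ} (ht : t ∈ Set.Ioc (0:ℝ) 1) : t ≤ Real.sin (π / 2 * t) := by
  have h := Real.mul_le_sin (x := π / 2 * t) (by have := ht.1; positivity)
    (by have := ht.2; nlinarith [pi_pos])
  have : 2 / π * (π / 2 * t) = t := by field_simp
  linarith

lemma ff_int : IntegrableOn ff (Set.Ioc 0 1) := by
  refine Measure.integrableOn_of_bounded (M := 1) (by simp) ?_ ?_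
  · apply Measurable.aestronglyMeasurable
    unfold ff
    fun_prop
  · refine (ae_restrict_iff' measurableSet_Ioc).2 (ae_of_all _ fun t ht => ?_)
    have h := sin_pos_aux ht
    have h0 := ht.1
    have h1 := ht.2
    unfold ff
    rw [Real.norm_eq_abs, abs_of_nonneg (by have := h0.trans_le h; positivity),
      div_le_one (h0.trans_le h)]
    refine le_trans ?_ h
    exact pow_le_of_le_one h0.le h1 (by norm_num)

lemma rl : Tendsto (fun N : ℕ => ∫ t in (0:ℝ)..1, ff t * Real.cos ((2 * N + 1) * (π / 2 * t)))
    atTop (𝓝 0) := by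
  have h := Real.tendsto_integral_exp_smul_cocompact
    (fun t => (((Set.Ioc (0:ℝ) 1).indicator ff t : ℝ) : ℂ))
  have hw : Tendsto (fun N : ℕ => (2 * (N : ℝ) + 1) / 4) atTop (cocompact ℝ) := by
    refine Tendsto.mono_right ?_ atTop_le_cocompact
    refine Tendsto.atTop_div_const (by norm_num) (tendsto_atTop_add_const_right _ _ ?_)
    exact tendsto_natCast_atTop_atTop.const_mul_atTop (by norm_num)
  have h2 := (Complex.continuous_re.tendsto _).comp (h.comp hw)
  rw [Complex.zero_re] at h2
  refine h2.congr fun N => ?_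
  simp only [Function.comp]
  rw [intervalIntegral.integral_of_le zero_le_one, ← integral_indicator measurableSet_Ioc]
  have hi : Integrable (fun t : ℝ => (((Set.Ioc (0:ℝ) 1).indicator ff t : ℝ) : ℂ)) :=
    ((integrable_indicator_iff measurableSet_Ioc).2 ff_int).ofReal
  have hi2 := (Real.fourierIntegral_convergent_iff' (innerSL ℝ) ((2 * (N : ℝ) + 1) / 4)).2 hi
  have := integral_re (𝕜 := ℂ) (f := fun v : ℝ => Real.fourierChar (-(v * ((2 * (N : ℝ) + 1) / 4))) •
    (((Set.Ioc (0:ℝ) 1).indicator ff v : ℝ) : ℂ)) (μ := volume) (by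
      refine hi2.congr (ae_of_all _ fun v => ?_)
      have e : innerSL ℝ v ((2 * (N : ℝ) + 1) / 4) = v * ((2 * (N : ℝ) + 1) / 4) := by
        simp [innerSL_apply_apply, mul_comm]
      change Real.fourierChar (-(innerSL ℝ v ((2 * (N : ℝ) + 1) / 4))) • _ = _
      rw [e])
  simp only [RCLike.re_to_complex] at this
  rw [← this]
  refine integral_congr_ae (ae_of_all _ fun t => ?_)
  by_cases ht : t ∈ Set.Ioc (0:ℝ) 1
  · simp only [Set.indicator_of_mem ht]
    rw [Circle.smul_def, Real.fourierChar_apply, smul_eq_mul, Complex.re_mul_ofReal,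
      Complex.exp_ofReal_mul_I_re, mul_comm, mul_neg, Real.cos_neg]
    congr 2
    ring
  · simp [Set.indicator_of_notMem ht]

lemma main_int : ∫ t in (0:ℝ)..1, ff t * Real.cos (π / 2 * t) =
    2 * (-(1 / π) * (- Real.log 2) + 12 / π ^ 3 * (2 / 2 ^ 3 * zr 3 - zr 3)
      - 24 / π ^ 5 * (2 / 2 ^ 5 * zr 5 - zr 5) + 24 / π ^ 5 * zr 5) := by
  have hI : ∀ g : ℝ → ℝ, Continuous g → (∀ x, |g x| ≤ 1) →
      IntervalIntegrable (fun t => ff t * g t) volume 0 1 := by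
    intro g hg hb
    rw [intervalIntegrable_iff_integrableOn_Ioc_of_le zero_le_one]
    exact Integrable.mul_bdd (c := 1) ff_int hg.aestronglyMeasurable (ae_of_all _ hb)
  have hS : Tendsto (fun N : ℕ => ∑ k ∈ Finset.range (2 * N),
      2 * ∫ t in (0:ℝ)..1, t ^ 4 * Real.sin ((((k : ℝ) + 1) * π) * t)) atTop
      (𝓝 (2 * (-(1 / π) * (- Real.log 2) + 12 / π ^ 3 * (2 / 2 ^ 3 * zr 3 - zr 3)
      - 24 / π ^ 5 * (2 / 2 ^ 5 * zr 5 - zr 5) + 24 / π ^ 5 * zr 5))) := by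
    simp_rw [int_sin_nat, ← Finset.mul_sum, Finset.sum_add_distrib, Finset.sum_sub_distrib,
      Finset.sum_add_distrib, ← Finset.mul_sum]
    exact ((((alt_tendsto_one.const_mul _).add
      ((alt_tendsto (by norm_num)).const_mul _)).sub
      ((alt_tendsto (by norm_num)).const_mul _)).add
      (((zr_summable (p := 5) (by norm_num)).hasSum.tendsto_sum_nat.comp
        tendsto_two_mul).const_mul _)).const_mul 2
  have hR := rl.comp tendsto_two_mul
  have hC := (tendsto_const_nhds (x := ∫ t in (0:ℝ)..1, ff t * Real.cos (π / 2 * t))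
    (f := (atTop : Filter ℕ))).sub hR
  rw [sub_zero] at hC
  refine tendsto_nhds_unique hC (hS.congr fun N => ?_)
  simp only [Function.comp]
  rw [← intervalIntegral.integral_sub (hI _ (by fun_prop) fun x => Real.abs_cos_le_one _)
    (hI _ (by fun_prop) fun x => Real.abs_cos_le_one _)]
  simp_rw [← intervalIntegral.integral_const_mul]
  rw [← intervalIntegral.integral_finsetSum
    (fun i _ => Continuous.intervalIntegrable (by fun_prop) _ _)]
  rw [intervalIntegral.integral_of_le zero_le_one, intervalIntegral.integral_of_le zero_le_one]
  refine setIntegral_congr_fun measurableSet_Ioc fun t ht => ?_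
  have hs : Real.sin (π / 2 * t) ≠ 0 := (ht.1.trans_le (sin_pos_aux ht)).ne'
  have hd := dirichlet (π / 2 * t) (2 * N)
  rw [← mul_sub, ← hd]
  unfold ff
  rw [div_mul_eq_mul_div, eq_div_iff hs, ← mul_assoc, Finset.mul_sum]
  congr 1
  refine Finset.sum_congr rfl fun k _ => ?_
  rw [show ((k : ℝ) + 1) * π * t = ((k : ℝ) + 1) * (2 * (π / 2 * t)) by ring]
  ring


lemma half_sum {x : ℝ} (h0 : 0 < x) (h1 : x < 1) :
    HasSum (fun k : ℕ => x ^ 2 / (((k : ℝ) + 1) ^ 2 - x ^ 2))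
      (1 / 2 - π * x / 2 * (Real.cos (π * x) / Real.sin (π * x))) := by
  have hx : (x : ℂ) ∈ Complex.integerComplement := by
    rw [Complex.mem_integerComplement_iff]
    rintro ⟨n, hn⟩
    have hn' : (n : ℝ) = x := by exact_mod_cast hn
    rw [← hn'] at h0 h1
    have a0 : 0 < n := by exact_mod_cast h0
    have a1 : n < 1 := by exact_mod_cast h1
    omega
  have hs := (summable_cotTerm hx).hasSum
  have ht : ∑' n, cotTerm (x : ℂ) n = π * Complex.cot (π * x) - 1 / x := (cot_series_rep' hx).symm
  rw [ht] at hs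
  have hs2 := hs.mul_left (-(x : ℂ) / 2)
  rw [← Complex.hasSum_ofReal]
  convert! hs2 using 1
  · funext k
    rw [cotTerm_identity hx]
    have e : ((k : ℝ) + 1) ^ 2 - x ^ 2 ≠ 0 := by
      have : (0:ℝ) ≤ k := by positivity
      nlinarith
    have e1 : (x : ℂ) + (k + 1) ≠ 0 := by
      have : (0:ℝ) ≤ k := by positivity
      have : x + (k + 1) ≠ 0 := by positivity
      exact_mod_cast this
    have e2 : (x : ℂ) - (k + 1) ≠ 0 := by
      have : (0:ℝ) ≤ k := by positivity
      have : x - (k + 1) ≠ 0 := by linarith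
      exact_mod_cast this
    have e' : ((k : ℂ) + 1) ^ 2 - (x : ℂ) ^ 2 ≠ 0 := by exact_mod_cast e
    push_cast
    field_simp
    ring
  · have : (x : ℂ) ≠ 0 := by exact_mod_cast h0.ne'
    rw [Complex.cot]
    push_cast
    field_simp
    ring

lemma gen_fun {x : ℝ} (h0 : 0 < x) (h1 : x < 1) :
    HasSum (fun n : ℕ => zr (2 * n + 2) * x ^ (2 * n + 2))
      (1 / 2 - π * x / 2 * (Real.cos (π * x) / Real.sin (π * x))) := by
  have hh := half_sum h0 h1
  have hk : ∀ k : ℕ, HasSum (fun n : ℕ => (x / ((k : ℝ) + 1)) ^ (2 * n + 2))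
      (x ^ 2 / (((k : ℝ) + 1) ^ 2 - x ^ 2)) := by
    intro k
    have hk0 : (0:ℝ) ≤ k := by positivity
    have hq : x / ((k : ℝ) + 1) < 1 := by rw [div_lt_one (by positivity)]; linarith
    have hq0 : 0 < x / ((k : ℝ) + 1) := by positivity
    have hg := (hasSum_geometric_of_lt_one (r := (x / ((k : ℝ) + 1)) ^ 2) (by positivity)
      (by nlinarith)).mul_left ((x / ((k : ℝ) + 1)) ^ 2)
    have e : ((k : ℝ) + 1) ^ 2 - x ^ 2 ≠ 0 := by nlinarith
    convert! hg using 1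
    · funext n
      rw [← pow_mul, ← pow_add]; congr 1; ring
    · have e3 : 1 - (x / ((k : ℝ) + 1)) ^ 2 = (((k : ℝ) + 1) ^ 2 - x ^ 2) / ((k : ℝ) + 1) ^ 2 := by
        field_simp
      rw [e3]
      field_simp
  have hsum : Summable (fun p : ℕ × ℕ => (x / ((p.1 : ℝ) + 1)) ^ (2 * p.2 + 2)) := by
    refine (summable_prod_of_nonneg (fun p => ?_)).2 ⟨fun k => (hk k).summable, ?_⟩
    · simp only [Pi.zero_apply]; positivity
    · exact hh.summable.congr fun k => ((hk k).tsum_eq).symm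
  have hH : HasSum (fun p : ℕ × ℕ => (x / ((p.1 : ℝ) + 1)) ^ (2 * p.2 + 2))
      (1 / 2 - π * x / 2 * (Real.cos (π * x) / Real.sin (π * x))) := by
    have a := hsum.hasSum.prod_fiberwise hk
    convert! hsum.hasSum using 1
    exact hh.unique a
  have hH2 := (Equiv.prodComm ℕ ℕ).hasSum_iff.2 hH
  refine hH2.prod_fiberwise fun n => ?_
  have := (zr_summable (p := 2 * n + 2) (by omega)).hasSum.mul_right (x ^ (2 * n + 2))
  convert! this using 1
  funext k
  simp [div_pow]
  ring

lemma zr_nonneg (p : ℕ) : 0 ≤ zr p := tsum_nonneg fun k => by positivity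

lemma zr_le (n : ℕ) : zr (2 * n + 2) ≤ zr 2 := by
  refine (zr_summable (by omega)).tsum_le_tsum (fun k => ?_) (zr_summable (by norm_num))
  gcongr
  · have : (0:ℝ) ≤ k := by positivity
    linarith
  · omega

lemma int_series : HasSum (fun n : ℕ => zr (2 * n + 2) / ((n + 3) * 4 ^ (n + 1)))
    (1 / 4 - π / 2 * ∫ t in (0:ℝ)..1, ff t * Real.cos (π / 2 * t)) := by
  have H := intervalIntegral.hasSum_integral_of_dominated_convergence (μ := volume)
    (a := (0:ℝ)) (b := 1)
    (F := fun (n : ℕ) (t : ℝ) => 2 * t ^ 3 * (zr (2 * n + 2) * (t / 2) ^ (2 * n + 2)))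
    (f := fun t => t ^ 3 - π / 2 * (ff t * Real.cos (π / 2 * t)))
    (fun n _ => 2 * (zr 2 * (1 / 4) ^ (n + 1)))
    (fun n => by
      apply Continuous.aestronglyMeasurable
      fun_prop)
    (fun n => ae_of_all _ fun t ht => by
      rw [Set.uIoc_of_le zero_le_one] at ht
      have h0 := ht.1
      have h1 := ht.2
      have hz := zr_nonneg (2 * n + 2)
      rw [Real.norm_eq_abs, abs_of_nonneg (by positivity)]
      have a1 : t ^ 3 ≤ 1 := pow_le_one₀ h0.le h1
      have a2 : (t / 2) ^ (2 * n + 2) ≤ (1 / 4) ^ (n + 1) := by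
        rw [show 2 * n + 2 = 2 * (n + 1) by ring, pow_mul]
        gcongr
        nlinarith
      have a3 := zr_le n
      calc 2 * t ^ 3 * (zr (2 * n + 2) * (t / 2) ^ (2 * n + 2))
          ≤ 2 * 1 * (zr 2 * (1 / 4) ^ (n + 1)) := by gcongr; exact zr_nonneg 2
        _ = _ := by ring)
    (ae_of_all _ fun t _ => by
      refine Summable.mul_left _ (Summable.mul_left _ ?_)
      exact (summable_nat_add_iff 1).2 (summable_geometric_of_lt_one (by norm_num) (by norm_num)))
    (by simp)
    (ae_of_all _ fun t ht => by
      rw [Set.uIoc_of_le zero_le_one] at ht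
      have hg := (gen_fun (x := t / 2) (by linarith [ht.1]) (by linarith [ht.2])).mul_left (2 * t ^ 3)
      convert! hg using 1
      unfold ff
      rw [show π * (t / 2) = π / 2 * t by ring]
      ring)
  have hI : IntervalIntegrable (fun t => ff t * Real.cos (π / 2 * t)) volume 0 1 := by
    rw [intervalIntegrable_iff_integrableOn_Ioc_of_le zero_le_one]
    exact Integrable.mul_bdd (c := 1) ff_int
      (Continuous.aestronglyMeasurable (by fun_prop)) (ae_of_all _ fun t => Real.abs_cos_le_one _)
  rw [intervalIntegral.integral_sub (Continuous.intervalIntegrable (by fun_prop) _ _)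
    (hI.const_mul _), intervalIntegral.integral_const_mul, integral_pow] at H
  convert! H using 1
  · funext n
    have : ∀ t : ℝ, 2 * t ^ 3 * (zr (2 * n + 2) * (t / 2) ^ (2 * n + 2)) =
        (2 * zr (2 * n + 2) / 4 ^ (n + 1)) * t ^ (2 * n + 5) := by
      intro t
      rw [div_pow, show (2:ℝ) ^ (2 * n + 2) = 4 ^ (n + 1) by
        rw [show 2 * n + 2 = 2 * (n + 1) by ring, pow_mul]; norm_num]
      ring
    simp_rw [this]
    rw [intervalIntegral.integral_const_mul, integral_pow]
    push_cast
    simp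
    field_simp
    ring
  · norm_num

theorem stmt4 :
    ∑' n : ℕ, riemannZeta (2 * n) / ((n + 2) * 4 ^ n) =
      -(Real.log 2 : ℂ) + 9 * riemannZeta 3 / (π : ℂ) ^ 2 -
        93 * riemannZeta 5 / (2 * (π : ℂ) ^ 4) := by
  have H := Complex.hasSum_ofReal.2 int_series
  have H2 : HasSum (fun n : ℕ => riemannZeta (2 * ((n + 1 : ℕ) : ℂ)) /
      ((((n + 1 : ℕ) : ℂ) + 2) * 4 ^ (n + 1)))
      ((1 / 4 - π / 2 * ∫ t in (0:ℝ)..1, ff t * Real.cos (π / 2 * t) : ℝ) : ℂ) := by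
    convert! H using 1
    funext n
    have hz := zr_zeta (p := 2 * n + 2) (by omega)
    push_cast at hz ⊢
    rw [← hz]
    ring_nf
  have H3 := (hasSum_nat_add_iff (f := fun n : ℕ => riemannZeta (2 * n) / ((n + 2) * 4 ^ n)) 1).1 H2
  rw [H3.tsum_eq, main_int]
  have h3 := zr_zeta (p := 3) (by norm_num)
  have h5 := zr_zeta (p := 5) (by norm_num)
  norm_num at h3 h5
  rw [h3, h5]
  have hp : (π : ℂ) ≠ 0 := by exact_mod_cast pi_ne_zero
  simp only [Finset.range_one, Finset.sum_singleton, Nat.cast_zero, mul_zero, riemannZeta_zero]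
  push_cast
  field_simp
  ring
end
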